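/- Define polynomials P_k(τ₀) by P_1 = 1, P_2(τ₀) = τ₀/2, and k P_k(τ₀) = τ₀ P_{k−1}(τ₀) + P_{k−2}(τ₀) for k ≥ 3. Then for all real τ, τ₀: √(π/2) exp(τ²/2)(erfc(τ₀/√2) − erfc(τ/√2)) = Σ_{k=1}^∞ P_k(τ₀)(τ − τ₀)^k, with the series converging for all τ. -/

import Mathlib

open Real MeasureTheory

/-- The complementary error function. -/
noncomputable def erfc (x : ℝ) : ℝ := (2 / Real.sqrt π) * ∫ t in Set.Ioi x, Real.exp (-t ^ 2)

/-!
Put `P 0 = 0`. The recurrence then reads `(n + 2) P (n + 2) = τ₀ P (n + 1) + P n` for every `n`,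
which says that the power series `F` centred at `τ₀` with coefficients `P n` formally satisfies
`F' = τ F + 1`. Dividing the recurrence by `n + 2` makes the coefficients decay faster than any
geometric sequence, so `F` is entire and the equation really holds. The integrating factor
`exp (-τ² / 2)` turns it into `F = exp (τ² / 2) ∫ exp (-y² / 2)`, an integral of the
Gaussian between `τ₀` and `τ`, that is, a difference of two values of `erfc`.
-/

section Decay

open Filter Set

theorem bddAbove_range_of_eventually_le_sup {α : Type*} [SemilatticeSup α] {u : ℕ → α}
    (h : ∀ᶠ n in atTop, u (n + 2) ≤ u (n + 1) ⊔ u n) : BddAbove (range u) := by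
  obtain ⟨N, hN⟩ := eventually_atTop.mp h
  have hbound : ∀ n ≥ N, u n ≤ u (N + 1) ⊔ u N ∧ u (n + 1) ≤ u (N + 1) ⊔ u N := by
    intro n hn
    induction n, hn using Nat.le_induction with
    | base => exact ⟨le_sup_right, le_sup_left⟩
    | succ n hn ih => exact ⟨ih.2, (hN n hn).trans (sup_le ih.2 ih.1)⟩
  have hbdd : IsBoundedUnder (· ≤ ·) atTop u :=
    isBoundedUnder_of_eventually_le (eventually_atTop.mpr ⟨N, fun n hn => (hbound n hn).1⟩)
  exact hbdd.bddAbove_range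

theorem bddAbove_range_mul_pow_of_mul_le {u : ℕ → ℝ} {A B r : ℝ} (hu : ∀ n, 0 ≤ u n)
    (hA : 0 ≤ A) (hB : 0 ≤ B) (hr : 0 ≤ r)
    (h : ∀ n : ℕ, ((n : ℝ) + 2) * u (n + 2) ≤ A * u (n + 1) + B * u n) :
    BddAbove (range fun n => u n * r ^ n) := by
  refine bddAbove_range_of_eventually_le_sup ?_
  filter_upwards [eventually_ge_atTop ⌈A * r + B * r ^ 2⌉₊] with n hn
  have hn' : A * r + B * r ^ 2 ≤ n + 2 := (Nat.ceil_le.mp hn).trans (by linarith)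
  set M := max (u (n + 1) * r ^ (n + 1)) (u n * r ^ n)
  have hM : 0 ≤ M := le_max_of_le_right (mul_nonneg (hu n) (by positivity))
  have hscaled : ((n : ℝ) + 2) * (u (n + 2) * r ^ (n + 2)) ≤ ((n : ℝ) + 2) * M :=
    calc ((n : ℝ) + 2) * (u (n + 2) * r ^ (n + 2))
        = ((n : ℝ) + 2) * u (n + 2) * r ^ (n + 2) := by ring
      _ ≤ (A * u (n + 1) + B * u n) * r ^ (n + 2) := by gcongr; exact h n
      _ = A * r * (u (n + 1) * r ^ (n + 1)) + B * r ^ 2 * (u n * r ^ n) := by ring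
      _ ≤ A * r * M + B * r ^ 2 * M := by
          gcongr
          exacts [le_max_left _ _, le_max_right _ _]
      _ = (A * r + B * r ^ 2) * M := by ring
      _ ≤ ((n : ℝ) + 2) * M := by gcongr
  exact le_of_mul_le_mul_left hscaled (by positivity)

end Decay

section PowerSeries

open Metric
open scoped ENNReal

theorem radius_eq_top_of_mul_norm_le {𝕜 E F : Type*} [NontriviallyNormedField 𝕜]
    [NormedAddCommGroup E] [NormedSpace 𝕜 E] [NormedAddCommGroup F] [NormedSpace 𝕜 F]
    {p : FormalMultilinearSeries 𝕜 E F} {A B : ℝ} (hA : 0 ≤ A) (hB : 0 ≤ B)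
    (h : ∀ n : ℕ, ((n : ℝ) + 2) * ‖p (n + 2)‖ ≤ A * ‖p (n + 1)‖ + B * ‖p n‖) :
    p.radius = ∞ := by
  refine ENNReal.eq_top_of_forall_nnreal_le fun r => ?_
  obtain ⟨C, hC⟩ :=
    bddAbove_range_mul_pow_of_mul_le (fun n => norm_nonneg (p n)) hA hB r.coe_nonneg h
  exact p.le_radius_of_bound C fun n => hC (Set.mem_range_self n)

theorem radius_eq_top_of_coeff_recurrence {𝕜 F : Type*} [RCLike 𝕜] [NormedAddCommGroup F]
    [NormedSpace 𝕜 F] {p : FormalMultilinearSeries 𝕜 𝕜 F} {s : 𝕜}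
    (hp : ∀ n, (n + 2) • p.coeff (n + 2) = s • p.coeff (n + 1) + p.coeff n) : p.radius = ∞ := by
  refine radius_eq_top_of_mul_norm_le (norm_nonneg s) zero_le_one fun n => ?_
  simp only [p.norm_apply_eq_norm_coef, one_mul]
  calc ((n : ℝ) + 2) * ‖p.coeff (n + 2)‖ = ‖(n + 2) • p.coeff (n + 2)‖ := by
        rw [RCLike.norm_nsmul 𝕜, nsmul_eq_mul]
        push_cast
        rfl
    _ ≤ ‖s‖ * ‖p.coeff (n + 1)‖ + ‖p.coeff n‖ := by
        rw [hp n, ← norm_smul]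
        exact norm_add_le _ _

variable {𝕜 F : Type*} [NontriviallyNormedField 𝕜] [NormedAddCommGroup F] [NormedSpace 𝕜 F]
  [CompleteSpace F] {p : FormalMultilinearSeries 𝕜 𝕜 F} {f : 𝕜 → F} {r : ℝ≥0∞} {s t : 𝕜}

theorem hasSum_deriv_of_hasFPowerSeriesOnBall (hf : HasFPowerSeriesOnBall f p s r)
    (ht : t ∈ eball s r) :
    HasSum (fun n => (t - s) ^ n • (n + 1) • p.coeff (n + 1)) (deriv f t) := by
  have hsum := (hf.fderiv.hasSum_sub ht).mapL (ContinuousLinearMap.apply 𝕜 F (1 : 𝕜))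
  simpa using hsum

theorem hasDerivAt_of_coeff_recurrence (hf : HasFPowerSeriesOnBall f p s r)
    (hp : ∀ n, (n + 2) • p.coeff (n + 2) = s • p.coeff (n + 1) + p.coeff n)
    (ht : t ∈ eball s r) :
    HasDerivAt f (t • f t + (p.coeff 1 - s • p.coeff 0)) t := by
  have hsum : HasSum (fun n => (t - s) ^ n • p.coeff n) (f t) := by
    simpa using hf.hasSum_sub ht
  have hsum_tail : HasSum (fun n => (t - s) ^ (n + 1) • p.coeff (n + 1)) (f t - p.coeff 0) := by
    simpa using (hasSum_nat_add_iff' 1).mpr hsum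
  have hderiv_tail : HasSum (fun n => (t - s) ^ (n + 1) • (n + 2) • p.coeff (n + 2))
      (deriv f t - p.coeff 1) := by
    simpa using (hasSum_nat_add_iff' 1).mpr (hasSum_deriv_of_hasFPowerSeriesOnBall hf ht)
  have hrec_tail : HasSum (fun n => (t - s) ^ (n + 1) • (n + 2) • p.coeff (n + 2))
      (s • (f t - p.coeff 0) + (t - s) • f t) := by
    refine ((hsum_tail.const_smul s).add (hsum.const_smul (t - s))).congr_fun fun n => ?_
    rw [hp n]
    module
  have hderiv : deriv f t = t • f t + (p.coeff 1 - s • p.coeff 0) := by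
    rw [sub_eq_iff_eq_add.mp (hderiv_tail.unique hrec_tail)]
    module
  rw [← hderiv]
  exact (hf.analyticAt_of_mem ht).differentiableAt.hasDerivAt

end PowerSeries

section GaussianODE

variable {F : Type*} [NormedAddCommGroup F] [NormedSpace ℝ F] [CompleteSpace F]

theorem hasDerivAt_exp_neg_sq_div_two (y : ℝ) :
    HasDerivAt (fun y : ℝ => exp (-y ^ 2 / 2)) (-y * exp (-y ^ 2 / 2)) y := by
  refine ((hasDerivAt_pow 2 y).fun_neg.div_const 2).exp.congr_deriv ?_
  push_cast
  ring

theorem eq_exp_smul_of_hasDerivAt {f : ℝ → F} {v : F}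
    (hf : ∀ y, HasDerivAt f (y • f y + v) y) (s t : ℝ) :
    f t = exp (t ^ 2 / 2) •
      (exp (-s ^ 2 / 2) • f s + (∫ y in s..t, exp (-y ^ 2 / 2)) • v) := by
  have hderiv (y : ℝ) :
      HasDerivAt (fun y => exp (-y ^ 2 / 2) • f y) (exp (-y ^ 2 / 2) • v) y := by
    refine ((hasDerivAt_exp_neg_sq_div_two y).smul (hf y)).congr_deriv ?_
    module
  have hcancel : exp (t ^ 2 / 2) * exp (-t ^ 2 / 2) = 1 := by
    rw [← exp_add, neg_div, add_neg_cancel, exp_zero]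
  rw [← intervalIntegral.integral_smul_const,
    intervalIntegral.integral_eq_sub_of_hasDerivAt (fun y _ => hderiv y)
      (Continuous.intervalIntegrable (by fun_prop) _ _),
    add_sub_cancel, smul_smul, hcancel, one_smul]

theorem hasSum_of_coeff_recurrence {p : FormalMultilinearSeries ℝ ℝ F} {s : ℝ}
    (hp : ∀ n, (n + 2) • p.coeff (n + 2) = s • p.coeff (n + 1) + p.coeff n) (t : ℝ) :
    HasSum (fun n => (t - s) ^ n • p.coeff n)
      (exp (t ^ 2 / 2) • (exp (-s ^ 2 / 2) • p.coeff 0 +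
        (∫ y in s..t, exp (-y ^ 2 / 2)) • (p.coeff 1 - s • p.coeff 0))) := by
  have hradius := radius_eq_top_of_coeff_recurrence hp
  have hf : HasFPowerSeriesOnBall (fun y => p.sum (y - s)) p s ⊤ := by
    simpa [hradius] using (p.hasFPowerSeriesOnBall (by simp [hradius])).comp_sub s
  have hcenter : p.sum (s - s) = p.coeff 0 := (hf.coeff_zero 1).symm
  have hsolution := eq_exp_smul_of_hasDerivAt
    (fun y => hasDerivAt_of_coeff_recurrence hf hp (by simp)) s t
  rw [hcenter] at hsolution
  rw [← hsolution]
  simpa using hf.hasSum_sub (y := t) (by simp)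

end GaussianODE

section Erfc

theorem erfc_sub_erfc (a b : ℝ) :
    erfc a - erfc b = 2 / √π * ∫ t in a..b, exp (-t ^ 2) := by
  have hint : Integrable fun t : ℝ => exp (-t ^ 2) := by
    simpa using integrable_exp_neg_mul_sq one_pos
  rw [erfc, erfc, ← mul_sub,
    intervalIntegral.integral_Ioi_sub_Ioi' hint.integrableOn hint.integrableOn]

theorem sqrt_mul_erfc_sub_erfc_eq_integral (a b : ℝ) :
    √(π / 2) * (erfc (a / √2) - erfc (b / √2)) = ∫ y in a..b, exp (-y ^ 2 / 2) := by
  have hrescale : ∫ y in a..b, exp (-y ^ 2 / 2) = √2 * ∫ t in a / √2..b / √2, exp (-t ^ 2) := by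
    rw [← smul_eq_mul, ← intervalIntegral.integral_comp_div _ (by positivity)]
    simp [div_pow, neg_div]
  have hconst : √(π / 2) * (2 / √π) = √2 := by
    rw [sqrt_div pi_pos.le]
    field_simp
    exact (sq_sqrt zero_le_two).symm
  rw [erfc_sub_erfc, hrescale, ← mul_assoc, hconst]

end Erfc

/-- With `P_1 = 1`, `P_2(τ₀) = τ₀/2` and `k P_k = τ₀ P_{k-1} + P_{k-2}` for `k ≥ 3`,
the function `E(τ) = √(π/2) e^{τ²/2}(erfc(τ₀/√2) - erfc(τ/√2))` equals the everywhere
convergent series `Σ_{k≥1} P_k(τ₀)(τ - τ₀)^k`. -/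
theorem E_power_series (P : ℕ → ℝ → ℝ)
    (hP1 : ∀ τ₀, P 1 τ₀ = 1) (hP2 : ∀ τ₀, P 2 τ₀ = τ₀ / 2)
    (hPrec : ∀ τ₀, ∀ k : ℕ, 3 ≤ k → (k : ℝ) * P k τ₀ = τ₀ * P (k - 1) τ₀ + P (k - 2) τ₀) :
    ∀ τ₀ τ : ℝ,
      HasSum (fun k : ℕ => P (k + 1) τ₀ * (τ - τ₀) ^ (k + 1))
        (Real.sqrt (π / 2) * Real.exp (τ ^ 2 / 2) *
          (erfc (τ₀ / Real.sqrt 2) - erfc (τ / Real.sqrt 2))) := by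
  intro s t
  set p := FormalMultilinearSeries.ofScalars ℝ (Function.update (P · s) 0 0) with hp_def
  have hp0 : p.coeff 0 = 0 := by simp [hp_def]
  have hp (k : ℕ) : p.coeff (k + 1) = P (k + 1) s := by simp [hp_def]
  have hrec (n : ℕ) : (n + 2) • p.coeff (n + 2) = s • p.coeff (n + 1) + p.coeff n := by
    rcases n with _ | n
    · simp only [hp, hp0, hP1, hP2, nsmul_eq_mul, smul_eq_mul]
      push_cast
      ring
    · rw [hp, hp, hp, nsmul_eq_mul]
      exact hPrec s (n + 3) (by lia)
  have hsum := (hasSum_nat_add_iff' 1).mpr (hasSum_of_coeff_recurrence hrec t)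
  convert! hsum using 1
  · simp [hp, mul_comm]
  · simp only [hp0, hp 0, hP1, ← sqrt_mul_erfc_sub_erfc_eq_integral,
      Finset.sum_range_one, smul_eq_mul]
    ring
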